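/- arXiv:2010.15390 — 7 statements merged into one kernel-verified Lean document; each statement's English description precedes it below -/
import Mathlib

section
/- For an ε-dissimilar M-player K-armed reward mean profile, the gaps of a subpar arm for any two players are within a factor of 2: for each arm i ∈ I_ε and every pair of players p, q ∈ [M], Δ_i^p < 2·Δ_i^q; consequently Δ_i^max < 2·Δ_i^min, where Δ_i^max = max_{p ∈ [M]} Δ_i^p. -/
/-!
In an `ε`-dissimilar profile the gaps of one arm for two players differ by at most `2ε`
(`gap_le_gap_add`). If some gap of the arm exceeds `5ε`, every gap of it therefore exceeds
`3ε ≥ 2ε`, so `Δ_i^p ≤ Δ_i^q + 2ε < 2 Δ_i^q`. The bound for the maximum and the minimum is the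
case where `p` and `q` attain them.
-/

/-- The optimal mean reward `μ*^p = max_{i ∈ [K]} μ_i^p` of player `p`. -/
noncomputable def muStar {K M : ℕ} [NeZero K] (μ : Fin K → Fin M → ℝ) (p : Fin M) : ℝ :=
  Finset.univ.sup' Finset.univ_nonempty fun i => μ i p

/-- The suboptimality gap `Δ_i^p = μ*^p − μ_i^p` of arm `i` for player `p`. -/
noncomputable def gap {K M : ℕ} [NeZero K] (μ : Fin K → Fin M → ℝ) (i : Fin K) (p : Fin M) : ℝ :=
  muStar μ p - μ i p

/-- The minimum gap `Δ_i^min = min_{p ∈ [M]} Δ_i^p` of arm `i`. -/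
noncomputable def gapMin {K M : ℕ} [NeZero K] [NeZero M] (μ : Fin K → Fin M → ℝ)
    (i : Fin K) : ℝ :=
  Finset.univ.inf' Finset.univ_nonempty fun p => gap μ i p

/-- The maximum gap `Δ_i^max = max_{p ∈ [M]} Δ_i^p` of arm `i`. -/
noncomputable def gapMax {K M : ℕ} [NeZero K] [NeZero M] (μ : Fin K → Fin M → ℝ)
    (i : Fin K) : ℝ :=
  Finset.univ.sup' Finset.univ_nonempty fun p => gap μ i p

/-- The optimal means of two players differ by at most `ε`, and so do their means of arm `i`,
so the two gaps of arm `i` differ by at most `2ε`. -/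
theorem gap_le_gap_add {M K : ℕ} [NeZero K] {ε : ℝ} {μ : Fin K → Fin M → ℝ}
    (hdis : ∀ (i : Fin K) (p q : Fin M), |μ i p - μ i q| ≤ ε) (i : Fin K) (p q : Fin M) :
    gap μ i p ≤ gap μ i q + 2 * ε := by
  have hstar : muStar μ p ≤ muStar μ q + ε := by
    refine Finset.sup'_le _ _ fun j _ => ?_
    have h1 : μ j q ≤ muStar μ q :=
      Finset.le_sup' (fun j => μ j q) (Finset.mem_univ j)
    linarith [(abs_le.mp (hdis j p q)).2]
  unfold gap
  linarith [(abs_le.mp (hdis i p q)).1]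

/-- For an ε-dissimilar M-player K-armed reward mean profile, the gaps of a subpar arm
(`i ∈ I_ε`, i.e. `∃ p, Δ_i^p > 5ε`) for any two players are within a factor of 2:
`Δ_i^p < 2 Δ_i^q` for all `p, q`; consequently `Δ_i^max < 2 Δ_i^min`. -/
theorem subpar_gap_ratio {M K : ℕ} [NeZero M] [NeZero K]
    (ε : ℝ) (hε : ε ∈ Set.Icc (0 : ℝ) 1)
    (μ : Fin K → Fin M → ℝ) (hμ : ∀ (i : Fin K) (p : Fin M), μ i p ∈ Set.Icc (0 : ℝ) 1)
    (hdis : ∀ (i : Fin K) (p q : Fin M), |μ i p - μ i q| ≤ ε) :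
    ∀ i : Fin K, (∃ p : Fin M, gap μ i p > 5 * ε) →
      (∀ p q : Fin M, gap μ i p < 2 * gap μ i q) ∧
      gapMax μ i < 2 * gapMin μ i := by
  rintro i ⟨p₀, hp₀⟩
  have hratio : ∀ p q : Fin M, gap μ i p < 2 * gap μ i q := by
    intro p q
    -- `Δ_i^q ≥ Δ_i^{p₀} - 2ε > 3ε ≥ 2ε`, so adding `2ε` to `Δ_i^q` less than doubles it.
    linarith [gap_le_gap_add hdis i p₀ q, gap_le_gap_add hdis i p q, hε.1]
  refine ⟨hratio, ?_⟩
  obtain ⟨p, _, hp⟩ := Finset.exists_mem_eq_sup' (Finset.univ_nonempty (α := Fin M))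
    (fun p => gap μ i p)
  obtain ⟨q, _, hq⟩ := Finset.exists_mem_eq_inf' (Finset.univ_nonempty (α := Fin M))
    (fun p => gap μ i p)
  unfold gapMax gapMin
  rw [hp, hq]
  exact hratio p q
end

section
/- If a and b both lie in the interval [1/4, 3/4], then the Kullback–Leibler divergence between the corresponding Bernoulli distributions satisfies KL(Ber(a), Ber(b)) = a·ln(a/b) + (1−a)·ln((1−a)/(1−b)) ≤ 3·(b−a)². -/
/-!
For fixed `a`, the function `x ↦ 3 (x - a)² - KL(Ber(a), Ber(x))` vanishes at `x = a` and has
derivative `(x - a) (6 - 1 / (x (1 - x)))`. On `[1/4, 3/4]` one has `x (1 - x) ≥ 3/16`, so the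
second factor is positive and the function is minimal at `x = a`. The case `a ≤ b` is
`kl_bernoulli_aux`; the case `b ≤ a` follows by the symmetry `(a, b) ↦ (1 - a, 1 - b)`.
-/

/-- The bound for `a ≤ b`, with the terms of the divergence depending only on `a` moved to the
left-hand side. -/
lemma kl_bernoulli_aux {a b : ℝ} (ha : 1 / 4 ≤ a) (hab : a ≤ b) (hb : b ≤ 3 / 4) :
    a * Real.log a + (1 - a) * Real.log (1 - a) ≤
      3 * (b - a) ^ 2 + a * Real.log b + (1 - a) * Real.log (1 - b) := by
  have hd : ∀ x ∈ Set.Icc a b,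
      HasDerivAt (fun x : ℝ => 3 * (x - a) ^ 2 + a * Real.log x + (1 - a) * Real.log (1 - x))
        ((x - a) * (6 - 1 / (x * (1 - x)))) x := by
    intro x hx
    have h0 : x ≠ 0 := by linarith [hx.1]
    have h1 : 1 - x ≠ 0 := by linarith [hx.2]
    have hid := hasDerivAt_id' x
    refine HasDerivAt.congr_deriv
      (((((hid.sub_const a).pow 2).const_mul 3).add ((hid.log h0).const_mul a)).add
        (((hid.const_sub 1).log h1).const_mul (1 - a))) ?_
    field_simp
    ring
  have hmono : MonotoneOn
      (fun x : ℝ => 3 * (x - a) ^ 2 + a * Real.log x + (1 - a) * Real.log (1 - x))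
      (Set.Icc a b) := by
    refine monotoneOn_of_deriv_nonneg (convex_Icc a b)
      (fun x hx => (hd x hx).continuousAt.continuousWithinAt)
      (fun x hx => (hd x (interior_subset hx)).differentiableAt.differentiableWithinAt) ?_
    intro x hx
    have hx' := interior_subset hx
    rw [(hd x hx').deriv]
    obtain ⟨hax, hxb⟩ := hx'
    refine mul_nonneg (by linarith) ?_
    have hprod : 1 / 6 ≤ x * (1 - x) := by nlinarith
    have : 1 / (x * (1 - x)) ≤ 6 := by
      rw [div_le_iff₀ (by linarith)]
      linarith
    linarith
  have h := hmono (Set.left_mem_Icc.2 hab) (Set.right_mem_Icc.2 hab) hab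
  simpa using h

/-- If `a` and `b` both lie in `[1/4, 3/4]`, then the KL divergence between the
corresponding Bernoulli distributions, `KL(Ber(a), Ber(b)) =
a ln(a/b) + (1−a) ln((1−a)/(1−b))`, is at most `3 (b−a)²`. -/
theorem kl_bernoulli_le {a b : ℝ}
    (ha : a ∈ Set.Icc (1/4 : ℝ) (3/4)) (hb : b ∈ Set.Icc (1/4 : ℝ) (3/4)) :
    a * Real.log (a / b) + (1 - a) * Real.log ((1 - a) / (1 - b)) ≤ 3 * (b - a) ^ 2 := by
  obtain ⟨ha0, ha1⟩ := ha
  obtain ⟨hb0, hb1⟩ := hb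
  rw [Real.log_div (by linarith) (by linarith), Real.log_div (by linarith) (by linarith)]
  rcases le_total a b with hab | hab
  · linarith [kl_bernoulli_aux ha0 hab hb1]
  · have h := kl_bernoulli_aux (a := 1 - a) (b := 1 - b) (by linarith) (by linarith) (by linarith)
    simp only [sub_sub_cancel] at h
    have hsq : (1 - b - (1 - a)) ^ 2 = (b - a) ^ 2 := by ring
    rw [hsq] at h
    linarith
end

section
/- Let m ≥ 2 and B ≥ 1 be integers, let P_0, P_1, …, P_m be probability measures on a common measurable space, and let N_1, …, N_m be random variables on that space such that, almost surely under each P_i (0 ≤ i ≤ m), N_1, …, N_m are nonnegative and Σ_{j=1}^m N_j ≤ B. Suppose that for all i ∈ [m], d_TV(P_0, P_i) ≤ (1/4)·√((m/B)·E_0[N_i]), where E_i denotes expectation under P_i. Then (1/m)·Σ_{i=1}^m E_i[B − N_i] ≥ B/4. -/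
/-!
Since `0 ≤ N i ≤ B`, the layer-cake formula `E[N i] = ∫₀ᴮ ℙ(N i ≥ t) dt` shows that changing the
measure from `P 0` to `P i` changes the expectation of `N i` by at most `B · d_TV(P 0, P i)`
(`integral_le_integral_add_mul_tvDist`). With `x i = E_0[N i]`, the hypothesis on the distances
and AM-GM, `√(m x i / B) ≤ (1 + m x i / B) / 2`, bound `E_i[N i]` by
`x i + (B + m x i) / 8`. As `∑ i, x i ≤ B`, summation gives
`∑ i, E_i[N i] ≤ B + m B / 4`, which is at most `3 m B / 4` because `m ≥ 2`.
-/

open MeasureTheory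

/-- The total variation distance `d_TV(P, Q) = sup_A |P(A) − Q(A)|`, the supremum over
measurable sets `A`. -/
noncomputable def tvDist {Ω : Type*} [MeasurableSpace Ω] (P Q : Measure Ω) : ℝ :=
  ⨆ A : {s : Set Ω // MeasurableSet s}, |(P A.1).toReal - (Q A.1).toReal|

theorem abs_measureReal_sub_le_tvDist {Ω : Type*} [MeasurableSpace Ω] (P Q : Measure Ω)
    [IsProbabilityMeasure P] [IsProbabilityMeasure Q] {A : Set Ω} (hA : MeasurableSet A) :
    |P.real A - Q.real A| ≤ tvDist P Q := by
  refine le_ciSup (f := fun A : {s : Set Ω // MeasurableSet s} =>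
    |(P A.1).toReal - (Q A.1).toReal|) ⟨1, ?_⟩ ⟨A, hA⟩
  rintro _ ⟨S, rfl⟩
  have h1 : P.real S.1 ≤ 1 := measureReal_le_one
  have h2 : Q.real S.1 ≤ 1 := measureReal_le_one
  have h3 : 0 ≤ P.real S.1 := measureReal_nonneg
  have h4 : 0 ≤ Q.real S.1 := measureReal_nonneg
  change |P.real S.1 - Q.real S.1| ≤ 1
  rw [abs_le]
  constructor <;> linarith

theorem integrable_of_ae_mem_Icc {Ω : Type*} [MeasurableSpace Ω] (P : Measure Ω)
    [IsProbabilityMeasure P] {f : Ω → ℝ} (hf : Measurable f) {b : ℝ}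
    (hP : ∀ᵐ ω ∂P, 0 ≤ f ω ∧ f ω ≤ b) : Integrable f P := by
  refine Integrable.of_bound hf.aestronglyMeasurable b ?_
  filter_upwards [hP] with ω h
  rw [Real.norm_eq_abs, abs_of_nonneg h.1]
  exact h.2

theorem integral_le_integral_add_mul_tvDist {Ω : Type*} [MeasurableSpace Ω] (P Q : Measure Ω)
    [IsProbabilityMeasure P] [IsProbabilityMeasure Q] {f : Ω → ℝ} (hf : Measurable f)
    {b : ℝ} (hb : 0 ≤ b) (hP : ∀ᵐ ω ∂P, 0 ≤ f ω ∧ f ω ≤ b)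
    (hQ : ∀ᵐ ω ∂Q, 0 ≤ f ω ∧ f ω ≤ b) :
    ∫ ω, f ω ∂Q ≤ ∫ ω, f ω ∂P + b * tvDist P Q := by
  -- The tail functions are antitone, hence integrable on the bounded interval.
  have tail : ∀ (μ : Measure Ω) [IsProbabilityMeasure μ],
      IntervalIntegrable (fun t => μ.real {ω | t ≤ f ω}) volume 0 b := by
    intro μ _
    refine Antitone.intervalIntegrable fun s t hst => ?_
    exact measureReal_mono fun ω (h : t ≤ f ω) => hst.trans h
  rw [(integrable_of_ae_mem_Icc P hf hP).integral_eq_integral_Ioc_meas_le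
      (hP.mono fun _ h => h.1) (hP.mono fun _ h => h.2),
    (integrable_of_ae_mem_Icc Q hf hQ).integral_eq_integral_Ioc_meas_le
      (hQ.mono fun _ h => h.1) (hQ.mono fun _ h => h.2),
    ← intervalIntegral.integral_of_le hb, ← intervalIntegral.integral_of_le hb]
  have hconst : b * tvDist P Q = ∫ _ in (0 : ℝ)..b, tvDist P Q := by simp
  rw [hconst, ← intervalIntegral.integral_add (tail P) intervalIntegrable_const]
  refine intervalIntegral.integral_mono_on hb (tail Q)
    ((tail P).add intervalIntegrable_const) fun t _ => ?_
  have h := (abs_le.1 (abs_measureReal_sub_le_tvDist P Q (A := {ω | t ≤ f ω})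
    (measurableSet_le measurable_const hf))).1
  linarith

/-- Let `m ≥ 2`, `B ≥ 1` be integers, `P 0, P 1, …, P m` probability measures on a common
measurable space, and `N 1, …, N m` random variables that are a.s. nonnegative with
`Σ_j N j ≤ B` under every `P i`. If `d_TV(P 0, P i) ≤ (1/4)·√((m/B)·E_0[N i])` for all
`i ∈ [m]`, then `(1/m)·Σ_i E_i[B − N i] ≥ B/4`. -/
theorem avg_missing_mass_ge {Ω : Type*} [MeasurableSpace Ω]
    (m B : ℕ) (hm : 2 ≤ m) (hB : 1 ≤ B)
    (P : Fin (m + 1) → Measure Ω) [∀ i, IsProbabilityMeasure (P i)]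
    (N : Fin m → Ω → ℝ) (hmeas : ∀ j, Measurable (N j))
    (hae : ∀ i : Fin (m + 1),
      ∀ᵐ ω ∂(P i), (∀ j : Fin m, 0 ≤ N j ω) ∧ (∑ j : Fin m, N j ω) ≤ (B : ℝ))
    (htv : ∀ j : Fin m,
      tvDist (P 0) (P j.succ) ≤
        (1 / 4) * Real.sqrt (((m : ℝ) / (B : ℝ)) * ∫ ω, N j ω ∂(P 0))) :
    (1 / (m : ℝ)) * ∑ j : Fin m, ∫ ω, ((B : ℝ) - N j ω) ∂(P j.succ) ≥ (B : ℝ) / 4 := by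
  have hBpos : (0 : ℝ) < B := by exact_mod_cast hB
  have hm2 : (2 : ℝ) ≤ m := by exact_mod_cast hm
  have hbd : ∀ (i : Fin (m + 1)) (j : Fin m), ∀ᵐ ω ∂(P i), 0 ≤ N j ω ∧ N j ω ≤ (B : ℝ) := by
    intro i j
    filter_upwards [hae i] with ω h
    exact ⟨h.1 j, (Finset.single_le_sum (f := fun j => N j ω) (fun k _ => h.1 k)
      (Finset.mem_univ j)).trans h.2⟩
  have hint : ∀ (i : Fin (m + 1)) (j : Fin m), Integrable (N j) (P i) :=
    fun i j => integrable_of_ae_mem_Icc (P i) (hmeas j) (hbd i j)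
  have hsum : ∑ j : Fin m, ∫ ω, N j ω ∂(P 0) ≤ B := by
    rw [← integral_finsetSum _ fun j _ => hint 0 j]
    calc ∫ ω, ∑ j : Fin m, N j ω ∂(P 0) ≤ ∫ _, (B : ℝ) ∂(P 0) :=
          integral_mono_ae (integrable_finsetSum _ fun j _ => hint 0 j) (integrable_const _)
            ((hae 0).mono fun _ h => h.2)
      _ = B := by simp
  have hterm : ∀ j : Fin m, (B : ℝ) - (∫ ω, N j ω ∂(P 0))
      - (B + m * ∫ ω, N j ω ∂(P 0)) / 8 ≤ ∫ ω, ((B : ℝ) - N j ω) ∂(P j.succ) := by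
    intro j
    have hx : 0 ≤ ∫ ω, N j ω ∂(P 0) := integral_nonneg_of_ae ((hbd 0 j).mono fun _ h => h.1)
    have htr := integral_le_integral_add_mul_tvDist (P 0) (P j.succ) (hmeas j) hBpos.le
      (hbd 0 j) (hbd j.succ j)
    have ht := htv j
    rw [integral_sub (integrable_const _) (hint _ j)]
    simp only [integral_const, probReal_univ, smul_eq_mul, one_mul]
    generalize (∫ ω, N j ω ∂(P 0)) = x at hx htr ht ⊢
    have hy : 0 ≤ (m : ℝ) / B * x := by positivity
    -- AM-GM for `1` and `m x / B`.
    have hs : Real.sqrt ((m : ℝ) / B * x) ≤ (1 + (m : ℝ) / B * x) / 2 := by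
      nlinarith [Real.sq_sqrt hy, sq_nonneg (Real.sqrt ((m : ℝ) / B * x) - 1)]
    have hB' : (B : ℝ) * tvDist (P 0) (P j.succ)
        ≤ B * ((1 / 4) * ((1 + (m : ℝ) / B * x) / 2)) := by
      gcongr
      linarith
    have he : (B : ℝ) * ((1 / 4) * ((1 + (m : ℝ) / B * x) / 2)) = (B + m * x) / 8 := by
      field_simp
      ring
    linarith
  have htot := Finset.sum_le_sum fun j (_ : j ∈ Finset.univ) => hterm j
  simp only [Finset.sum_sub_distrib, ← Finset.sum_div, Finset.sum_add_distrib,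
    ← Finset.mul_sum, Finset.sum_const, Finset.card_univ, Fintype.card_fin,
    nsmul_eq_mul] at htot
  rw [ge_iff_le, one_div, ← div_eq_inv_mul, le_div_iff₀ (by linarith)]
  nlinarith
end

section
/- Fix reals A > 0, B > 0 and β ∈ (0,1), and define f(α) = 2B·√(α²/β + (1−α)²/(1−β)) + 2(1−α)·A. Define α* = 1 if β ≥ B²/A², and α* = β·(1 + (1−β)/√(B²/A² − β(1−β))) if β < B²/A². Then α* ∈ [0,1] and α* is the unique minimizer of f over [0,1], i.e., f(α*) ≤ f(α) for all α ∈ [0,1], with strict inequality whenever α ≠ α*. -/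
/-!
In the case `B²/A² ≤ β`, dropping the second summand under the root gives
`√(α²/β + (1-α)²/(1-β)) > α/√β` for `0 ≤ α < 1`; as `A ≥ B/√β`, this yields
`f α > 2 (α · B/√β + (1-α) · A) ≥ 2 B/√β = f 1`.

In the other case put `s = √(B²/A² - β(1-β))`. The expression under the root equals
`1 + (α-β)²/(β(1-β))`, and completing the square shows that `f` stays above the constant
`2A(s + 1 - β)`, with equality exactly when `s(α-β) = β(1-β)`, that is, at `α = α*`
(`lower_bound_interior`). The condition `β < B²/A²` means `s > β`, which gives `α* ≤ 1`.
-/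

/-- The root in the objective exceeds the affine function `(A/B)(s + α - β)`, where
`s² + β(1-β) = B²/A²`, except at the single point where they touch: after multiplying both by `B`,
the difference of their squares is `A² (β(1-β) - s(α-β))² / (β(1-β))`. -/
lemma lower_bound_interior {A B β s α : ℝ} (hA : 0 < A) (hB : 0 < B) (h0 : 0 < β) (h1 : β < 1)
    (hs : B ^ 2 = A ^ 2 * (s ^ 2 + β * (1 - β))) (hne : s * (α - β) ≠ β * (1 - β)) :
    A * (s + (α - β)) < B * √(α ^ 2 / β + (1 - α) ^ 2 / (1 - β)) := by
  have h1' : 0 < 1 - β := by linarith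
  have hQ : 0 ≤ α ^ 2 / β + (1 - α) ^ 2 / (1 - β) := by positivity
  apply lt_of_pow_lt_pow_left₀ 2 (by positivity)
  rw [mul_pow B, Real.sq_sqrt hQ, hs, ← sub_pos]
  have key : A ^ 2 * (s ^ 2 + β * (1 - β)) * (α ^ 2 / β + (1 - α) ^ 2 / (1 - β))
      - (A * (s + (α - β))) ^ 2
      = A ^ 2 * (β * (1 - β) - s * (α - β)) ^ 2 / (β * (1 - β)) := by
    field_simp
    ring
  rw [key]
  have : β * (1 - β) - s * (α - β) ≠ 0 := fun h => hne (by linarith)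
  positivity

/-- Fix `A, B > 0` and `β ∈ (0,1)`, and let
`f(α) = 2B·√(α²/β + (1−α)²/(1−β)) + 2(1−α)·A`. Define `α* = 1` if `β ≥ B²/A²`, and
`α* = β·(1 + (1−β)/√(B²/A² − β(1−β)))` otherwise. Then `α* ∈ [0,1]` and `α*` is the
unique minimizer of `f` over `[0,1]`. -/
theorem argmin_weight (A B β : ℝ) (hA : 0 < A) (hB : 0 < B) (hβ : β ∈ Set.Ioo (0 : ℝ) 1)
    (f : ℝ → ℝ)
    (hf : ∀ α : ℝ, f α = 2 * B * Real.sqrt (α ^ 2 / β + (1 - α) ^ 2 / (1 - β))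
      + 2 * (1 - α) * A)
    (αs : ℝ)
    (hαs : αs = if B ^ 2 / A ^ 2 ≤ β then 1
      else β * (1 + (1 - β) / Real.sqrt (B ^ 2 / A ^ 2 - β * (1 - β)))) :
    αs ∈ Set.Icc (0 : ℝ) 1 ∧
      (∀ α ∈ Set.Icc (0 : ℝ) 1, f αs ≤ f α) ∧
      (∀ α ∈ Set.Icc (0 : ℝ) 1, α ≠ αs → f αs < f α) := by
  obtain ⟨h0, h1⟩ := hβ
  have h1' : 0 < 1 - β := by linarith
  -- The weak inequality follows from the strict one.
  suffices h : αs ∈ Set.Icc (0 : ℝ) 1 ∧ ∀ α ∈ Set.Icc (0 : ℝ) 1, α ≠ αs → f αs < f α by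
    refine ⟨h.1, fun α hα => ?_, h.2⟩
    rcases eq_or_ne α αs with rfl | hne
    · exact le_rfl
    · exact (h.2 α hα hne).le
  split_ifs at hαs with hc
  · subst hαs
    refine ⟨by simp, fun α hα hne => ?_⟩
    obtain ⟨hα0, hα1⟩ := hα
    have hlt : 0 < 1 - α := by linarith [lt_of_le_of_ne hα1 hne]
    have hb : 0 < √β := Real.sqrt_pos.2 h0
    have hbb : √β ^ 2 = β := Real.sq_sqrt h0.le
    have hf1 : f 1 = 2 * (B / √β) := by
      rw [hf]
      simp
      ring
    have hAB : B / √β ≤ A := by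
      rw [div_le_iff₀ hb]
      refine (pow_le_pow_iff_left₀ hB.le (by positivity) two_ne_zero).1 ?_
      rw [mul_pow, hbb]
      rw [div_le_iff₀ (by positivity)] at hc
      linarith
    have hroot : α / √β < √(α ^ 2 / β + (1 - α) ^ 2 / (1 - β)) := by
      apply Real.lt_sqrt_of_sq_lt
      rw [div_pow, hbb]
      have : 0 < (1 - α) ^ 2 / (1 - β) := by positivity
      linarith
    have h2 := mul_lt_mul_of_pos_left hroot hB
    have h3 := mul_le_mul_of_nonneg_left hAB hlt.le
    have h4 : B * (α / √β) = α * (B / √β) := by ring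
    rw [hf1, hf]
    linarith
  · push Not at hc
    have hR : 0 < B ^ 2 / A ^ 2 - β * (1 - β) := by nlinarith
    set s := √(B ^ 2 / A ^ 2 - β * (1 - β)) with hsdef
    have hs2 : s ^ 2 = B ^ 2 / A ^ 2 - β * (1 - β) := Real.sq_sqrt hR.le
    have hs0 : 0 < s := Real.sqrt_pos.2 hR
    have hs : B ^ 2 = A ^ 2 * (s ^ 2 + β * (1 - β)) := by
      rw [hs2]
      field_simp
      ring
    have hβs : β < s := Real.lt_sqrt_of_sq_lt (by linarith)
    have hαβ : s * (αs - β) = β * (1 - β) := by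
      rw [hαs]
      field_simp
      ring
    refine ⟨⟨by rw [hαs]; positivity, ?_⟩, fun α _ hne => ?_⟩
    · by_contra! h
      nlinarith
    · have hlow := lower_bound_interior (α := α) hA hB h0 h1 hs (fun h => hne (by
        have := mul_left_cancel₀ hs0.ne' (h.trans hαβ.symm)
        linarith))
      have hnn : 0 ≤ s + (αs - β) := by
        have : 0 < αs - β := pos_of_mul_pos_right (by rw [hαβ]; positivity) hs0.le
        linarith
      -- At `αs` the bound of `lower_bound_interior` is attained.
      have hatt : B * √(αs ^ 2 / β + (1 - αs) ^ 2 / (1 - β)) = A * (s + (αs - β)) := by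
        rw [← sq_eq_sq₀ (by positivity) (by positivity), mul_pow B,
          Real.sq_sqrt (by positivity), hs]
        have hα' : αs = β + β * (1 - β) / s := by
          field_simp
          linarith
        rw [hα']
        field_simp
        ring
      rw [hf, hf]
      linarith
end

section
/- For any integer m ≥ 10 and any μ ∈ [3/8, 5/8], setting Δ = 1/(3√m), one has m·KL(Ber(μ), Ber(μ + Δ)) ≤ 1/3, i.e., m·(μ·ln(μ/(μ+Δ)) + (1−μ)·ln((1−μ)/(1−μ−Δ))) ≤ 1/3. -/
/-!
Write `Δ = 1/(3√m)`, so that `m Δ² = 1/9` and it suffices to bound the divergence by `3 Δ²`.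
The two logarithms are controlled by `log (1 + x) ≥ 2x/(x + 2)` and by
`log t ≤ sinh (log t) = (t - t⁻¹)/2` for `t ≥ 1`. The first-order terms cancel and leave
`KL ≤ Δ² (1/(2μ + Δ) + 1/(2(1 - μ - Δ)))`. Since `m ≥ 9`, `Δ ≤ 1/9`, and on `[3/8, 5/8]` the
bracket is at most `(1/μ + 1/(8/9 - μ))/2 ≤ 3`.
-/

lemma mul_log_div_add_le {a d : ℝ} (ha : 0 < a) (hd : 0 ≤ d) :
    a * Real.log (a / (a + d)) ≤ -d + d ^ 2 / (2 * a + d) := by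
  have h := Real.le_log_one_add_of_nonneg (div_nonneg hd ha.le)
  have e : Real.log (a / (a + d)) = -Real.log (1 + d / a) := by
    rw [← Real.log_inv]
    congr 1
    field_simp
  have h2 := mul_le_mul_of_nonneg_left h ha.le
  have e2 : a * (2 * (d / a) / (d / a + 2)) = d - d ^ 2 / (2 * a + d) := by
    have h1 : 2 * a + d ≠ 0 := by positivity
    have h3 : d / a + 2 ≠ 0 := by positivity
    have h4 : d + 2 * a ≠ 0 := by positivity
    field_simp
    ring
  rw [e2] at h2
  rw [e]
  linarith

lemma mul_log_div_sub_le {b d : ℝ} (hd : 0 ≤ d) (hdb : d < b) :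
    b * Real.log (b / (b - d)) ≤ d + d ^ 2 / (2 * (b - d)) := by
  have hc : 0 < b - d := sub_pos.2 hdb
  have hb : 0 < b := hd.trans_lt hdb
  have ht : 1 ≤ b / (b - d) := by
    rw [le_div_iff₀ hc]
    linarith
  have h := Real.self_le_sinh_iff.2 (Real.log_nonneg ht)
  rw [Real.sinh_log (by positivity)] at h
  refine (mul_le_mul_of_nonneg_left h hb.le).trans_eq ?_
  have hc' := hc.ne'
  field_simp
  ring

/-- For any integer `m ≥ 10` and `μ ∈ [3/8, 5/8]`, setting `Δ = 1/(3√m)`, one has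
`m · KL(Ber(μ), Ber(μ+Δ)) ≤ 1/3`, where
`KL(Ber(a), Ber(b)) = a ln(a/b) + (1−a) ln((1−a)/(1−b))`. -/
theorem m_mul_kl_le (m : ℕ) (hm : 10 ≤ m) (μ : ℝ) (hμ : μ ∈ Set.Icc (3/8 : ℝ) (5/8)) :
    (m : ℝ) * (μ * Real.log (μ / (μ + 1 / (3 * Real.sqrt m)))
      + (1 - μ) * Real.log ((1 - μ) / (1 - μ - 1 / (3 * Real.sqrt m)))) ≤ 1 / 3 := by
  obtain ⟨h1, h2⟩ := hμ
  have hm' : (10 : ℝ) ≤ m := by exact_mod_cast hm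
  have hs : 3 ≤ Real.sqrt m := Real.le_sqrt_of_sq_le (by linarith)
  have hsq : Real.sqrt m ^ 2 = m := Real.sq_sqrt (by linarith)
  set d := 1 / (3 * Real.sqrt m) with hd
  have hd0 : 0 ≤ d := by positivity
  have hd9 : d ≤ 1 / 9 := by
    rw [hd]
    exact one_div_le_one_div_of_le (by norm_num) (by linarith)
  have hmd : (m : ℝ) * d ^ 2 = 1 / 9 := by
    have : Real.sqrt m ≠ 0 := by positivity
    rw [← hsq, hd]
    field_simp
    norm_num
  have hA := mul_log_div_add_le (a := μ) (by linarith) hd0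
  have hB := mul_log_div_sub_le (b := 1 - μ) hd0 (by linarith)
  have hc : 1 / (2 * μ + d) + 1 / (2 * (1 - μ - d)) ≤ 3 := by
    have k1 : 1 / (2 * μ + d) ≤ 1 / (2 * μ) :=
      one_div_le_one_div_of_le (by linarith) (by linarith)
    have k2 : 1 / (2 * (1 - μ - d)) ≤ 1 / (2 * (8 / 9 - μ)) :=
      one_div_le_one_div_of_le (by linarith) (by linarith)
    have k3 : 1 / (2 * μ) + 1 / (2 * (8 / 9 - μ)) ≤ 3 := by
      have p1 : 0 < 2 * μ := by linarith
      have p2 : 0 < 2 * (8 / 9 - μ) := by linarith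
      rw [div_add_div _ _ p1.ne' p2.ne', div_le_iff₀ (mul_pos p1 p2)]
      nlinarith [mul_nonneg (sub_nonneg.2 h1) (sub_nonneg.2 h2)]
    linarith
  have hkl : μ * Real.log (μ / (μ + d)) + (1 - μ) * Real.log ((1 - μ) / (1 - μ - d))
      ≤ 3 * d ^ 2 := by
    have := mul_le_mul_of_nonneg_left hc (sq_nonneg d)
    rw [mul_add, mul_one_div, mul_one_div] at this
    linarith
  have := mul_le_mul_of_nonneg_left hkl (show (0 : ℝ) ≤ m by positivity)
  linarith
end

section
/- For any integers m ≥ 10 and n ≥ 0 and any μ ∈ [3/8, 5/8], setting Δ = 1/(3√m), the total variation distance between the product measures Ber(μ)^{⊗m} ⊗ Ber(μ)^{⊗n} and Ber(μ+Δ)^{⊗m} ⊗ Ber(μ)^{⊗n} on {0,1}^{m+n} is at most 1/2. -/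
/-!
The proof compares the total variation distance with the `χ²`-divergence, which tensorizes.

For probability vectors `P > 0` and `Q` on a finite space and a set `A`, the difference
`P(A) - Q(A)` is `∑ (1_A - 1/2) (P - Q)`, because `P - Q` has total mass zero. Hence
`|P(A) - Q(A)| ≤ (1/2) ∑ |P - Q|`, and `|P - Q| ≤ (P + (P - Q)² / P) / 2` pointwise turns this into
`|P(A) - Q(A)| ≤ (1 + χ²) / 4`, where `1 + χ² = ∑ Q² / P`. So it suffices that `∑ Q² / P ≤ 2`
(`abs_sum_sub_sum_le_half`).

The common factor `Ber(μ)^{⊗n}` contributes a factor `1` to `∑ Q² / P`, and each of the other `m`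
coordinates contributes `1 + Δ² / (μ (1 - μ)) ≤ 1 + 64 / (135 m) ≤ 1 + 1 / (2 m)`.
Therefore `∑ Q² / P ≤ (1 + 1 / (2 m))^m ≤ exp (1 / 2) ≤ 2`.
-/

open MeasureTheory

/-- The Bernoulli probability measure on `{0,1}` (modeled as `Bool`) with mean `p`
(for `p ∈ [0,1]`). -/
noncomputable def bern (p : ℝ) : Measure Bool :=
  ENNReal.ofReal p • Measure.dirac true + ENNReal.ofReal (1 - p) • Measure.dirac false

instance (p : ℝ) : IsFiniteMeasure (bern p) := by
  constructor
  simp only [bern, Measure.add_apply, Measure.smul_apply, smul_eq_mul, measure_univ, mul_one]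
  exact ENNReal.add_lt_top.mpr ⟨ENNReal.ofReal_lt_top, ENNReal.ofReal_lt_top⟩

/-- The mass function of the Bernoulli law with mean `p`. -/
def bernMass (p : ℝ) (b : Bool) : ℝ := if b then p else 1 - p

lemma bernMass_pos {p : ℝ} (h0 : 0 < p) (h1 : p < 1) (b : Bool) : 0 < bernMass p b := by
  cases b <;> simp [bernMass, h0, h1]

lemma bern_real_singleton {p : ℝ} (h0 : 0 < p) (h1 : p < 1) (b : Bool) :
    (bern p {b}).toReal = bernMass p b := by
  cases b <;> simp [bern, bernMass, h0.le, h1.le]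

lemma sum_prod_bernMass (p : ℝ) (k : ℕ) :
    ∑ x : Fin k → Bool, ∏ i, bernMass p (x i) = 1 := by
  rw [← Fintype.sum_pow]
  simp [bernMass]

lemma toReal_prod_pi_bern {m n : ℕ} {p r : ℝ} (hp0 : 0 < p) (hp1 : p < 1) (hr0 : 0 < r)
    (hr1 : r < 1) (A : Set ((Fin m → Bool) × (Fin n → Bool))) [DecidablePred (· ∈ A)] :
    (((Measure.pi fun _ : Fin m => bern p).prod (Measure.pi fun _ : Fin n => bern r)) A).toReal =
      ∑ z, if z ∈ A then (∏ i, bernMass p (z.1 i)) * ∏ i, bernMass r (z.2 i) else 0 := by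
  set M := (Measure.pi fun _ : Fin m => bern p).prod (Measure.pi fun _ : Fin n => bern r) with hM
  have hA : A = ((Finset.univ.filter (· ∈ A) : Finset ((Fin m → Bool) × (Fin n → Bool))) :
      Set ((Fin m → Bool) × (Fin n → Bool))) := by
    ext z; simp
  have h1 : M A = ∑ z ∈ Finset.univ.filter (· ∈ A), M {z} := by
    conv_lhs => rw [hA]
    exact (sum_measure_singleton).symm
  rw [h1, ENNReal.toReal_sum (fun z _ => measure_ne_top M {z}), Finset.sum_filter]
  refine Finset.sum_congr rfl fun z _ => ?_
  split_ifs
  · obtain ⟨x, y⟩ := z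
    rw [hM, ← Set.singleton_prod_singleton, Measure.prod_prod, Measure.pi_singleton,
      Measure.pi_singleton, ENNReal.toReal_mul, ENNReal.toReal_prod, ENNReal.toReal_prod]
    simp only [bern_real_singleton hp0 hp1, bern_real_singleton hr0 hr1]
  · rfl

/-- A form of `d_TV ≤ (1 + χ²) / 4` on a finite space, specialized to `χ² ≤ 1`. -/
lemma abs_sum_sub_sum_le_half {Ω : Type*} [Fintype Ω] (P Q : Ω → ℝ) (hP : ∀ z, 0 < P z)
    (hP1 : ∑ z, P z = 1) (hQ1 : ∑ z, Q z = 1) (hPQ : ∑ z, Q z ^ 2 / P z ≤ 2)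
    (A : Set Ω) [DecidablePred (· ∈ A)] :
    |(∑ z, if z ∈ A then P z else 0) - ∑ z, if z ∈ A then Q z else 0| ≤ 1 / 2 := by
  have key : (∑ z, if z ∈ A then P z else 0) - (∑ z, if z ∈ A then Q z else 0) =
      ∑ z, (if z ∈ A then (1 / 2 : ℝ) else -(1 / 2)) * (P z - Q z) := by
    have h0 : ∑ z, (P z - Q z) / 2 = 0 := by
      rw [← Finset.sum_div, Finset.sum_sub_distrib, hP1, hQ1]; simp
    rw [← Finset.sum_sub_distrib, ← sub_zero (∑ z, _), ← h0, ← Finset.sum_sub_distrib]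
    refine Finset.sum_congr rfl fun z _ => ?_
    split_ifs <;> ring
  have hpt : ∀ z, |(if z ∈ A then (1 / 2 : ℝ) else -(1 / 2)) * (P z - Q z)| ≤
      (2 * P z - 2 * Q z + Q z ^ 2 / P z) / 4 := by
    intro z
    have h1 : |(if z ∈ A then (1 / 2 : ℝ) else -(1 / 2))| = 1 / 2 := by
      split_ifs <;> norm_num [abs_of_pos]
    have h2 : 2 * P z - 2 * Q z + Q z ^ 2 / P z = (P z ^ 2 + (P z - Q z) ^ 2) / P z := by
      have := (hP z).ne'
      field_simp
      ring
    have h3 : 2 * |P z - Q z| ≤ (P z ^ 2 + (P z - Q z) ^ 2) / P z := by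
      rw [le_div_iff₀ (hP z), ← sq_abs (P z - Q z)]
      nlinarith [sq_nonneg (P z - |P z - Q z|)]
    rw [abs_mul, h1, h2]
    linarith
  rw [key]
  calc _ ≤ ∑ z, |(if z ∈ A then (1 / 2 : ℝ) else -(1 / 2)) * (P z - Q z)| :=
        Finset.abs_sum_le_sum_abs _ _
    _ ≤ ∑ z, (2 * P z - 2 * Q z + Q z ^ 2 / P z) / 4 := Finset.sum_le_sum fun z _ => hpt z
    _ = (2 * ∑ z, P z - 2 * ∑ z, Q z + ∑ z, Q z ^ 2 / P z) / 4 := by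
        rw [← Finset.sum_div, Finset.sum_add_distrib, Finset.sum_sub_distrib, Finset.mul_sum,
          Finset.mul_sum]
    _ ≤ 1 / 2 := by rw [hP1, hQ1]; linarith

/-- Tensorization: `1 + χ²` of a product is the product of the values of `1 + χ²`, and the common
second factor contributes `1`. -/
lemma sum_sq_div_prod {m n : ℕ} {p q : ℝ} (h0 : 0 < p) (h1 : p < 1) :
    ∑ z : (Fin m → Bool) × (Fin n → Bool),
      ((∏ i, bernMass q (z.1 i)) * ∏ i, bernMass p (z.2 i)) ^ 2 /
        ((∏ i, bernMass p (z.1 i)) * ∏ i, bernMass p (z.2 i)) =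
      (1 + (q - p) ^ 2 / (p * (1 - p))) ^ m := by
  have hz : ∀ z : (Fin m → Bool) × (Fin n → Bool),
      ((∏ i, bernMass q (z.1 i)) * ∏ i, bernMass p (z.2 i)) ^ 2 /
        ((∏ i, bernMass p (z.1 i)) * ∏ i, bernMass p (z.2 i)) =
      (∏ i, bernMass q (z.1 i) ^ 2 / bernMass p (z.1 i)) * ∏ i, bernMass p (z.2 i) := by
    intro z
    have hx : (∏ i, bernMass p (z.1 i)) ≠ 0 :=
      (Finset.prod_pos fun i _ => bernMass_pos h0 h1 _).ne'
    have hy : (∏ i, bernMass p (z.2 i)) ≠ 0 :=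
      (Finset.prod_pos fun i _ => bernMass_pos h0 h1 _).ne'
    rw [Finset.prod_div_distrib, Finset.prod_pow]
    field_simp
  simp only [hz]
  rw [Fintype.sum_prod_type]
  dsimp only
  rw [← Fintype.sum_mul_sum, sum_prod_bernMass, mul_one,
    ← Fintype.sum_pow (fun b => bernMass q b ^ 2 / bernMass p b)]
  congr 1
  have hp : p ≠ 0 := h0.ne'
  have hp' : 1 - p ≠ 0 := by linarith
  simp only [Fintype.sum_bool, bernMass]
  simp only [if_true, Bool.false_eq_true, if_false]
  field_simp
  ring

/-- The constants: `9 μ (1 - μ) ≥ 135 / 64 ≥ 2`, so the base is at most `1 + 1 / (2 m)`. -/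
lemma chiSq_pow_le_two {m : ℕ} (hm : 10 ≤ m) {μ : ℝ} (hμ : μ ∈ Set.Icc (3/8 : ℝ) (5/8)) :
    (1 + (μ + 1 / (3 * Real.sqrt m) - μ) ^ 2 / (μ * (1 - μ))) ^ m ≤ 2 := by
  obtain ⟨hl, hu⟩ := hμ
  have hm0 : (0 : ℝ) < m := by exact_mod_cast (by omega : 0 < m)
  have hv : 15 / 64 ≤ μ * (1 - μ) := by nlinarith
  have hsq : (μ + 1 / (3 * Real.sqrt m) - μ) ^ 2 = 1 / (9 * m) := by
    rw [add_sub_cancel_left, div_pow, mul_pow, Real.sq_sqrt hm0.le]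
    norm_num
  have hb : (μ + 1 / (3 * Real.sqrt m) - μ) ^ 2 / (μ * (1 - μ)) ≤ 1 / 2 / m := by
    rw [hsq, div_div, div_div, div_le_div_iff₀ (by positivity) (by positivity)]
    nlinarith
  have hb0 : 0 ≤ (μ + 1 / (3 * Real.sqrt m) - μ) ^ 2 / (μ * (1 - μ)) := by positivity
  have hexp : Real.exp (1 / 2) ≤ 2 := by
    have h := Real.exp_one_lt_d9
    have h2 : Real.exp (1 / 2) * Real.exp (1 / 2) = Real.exp 1 := by
      rw [← Real.exp_add]; norm_num
    nlinarith [Real.exp_pos (1 / 2)]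
  calc _ ≤ Real.exp (1 / 2 / m) ^ m := by
        refine pow_le_pow_left₀ (by linarith) ?_ m
        linarith [Real.add_one_le_exp ((1 : ℝ) / 2 / m)]
    _ = Real.exp (1 / 2) := by
        rw [← Real.exp_nat_mul]
        congr 1
        field_simp
    _ ≤ 2 := hexp

/-- For integers `m ≥ 10`, `n ≥ 0` and `μ ∈ [3/8, 5/8]`, with `Δ = 1/(3√m)`, the total
variation distance between the product measures `Ber(μ)^{⊗m} ⊗ Ber(μ)^{⊗n}` and
`Ber(μ+Δ)^{⊗m} ⊗ Ber(μ)^{⊗n}` is at most `1/2`. -/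
theorem tv_product_le_half (m n : ℕ) (hm : 10 ≤ m) (μ : ℝ)
    (hμ : μ ∈ Set.Icc (3/8 : ℝ) (5/8)) :
    tvDist
      ((Measure.pi fun _ : Fin m => bern μ).prod (Measure.pi fun _ : Fin n => bern μ))
      ((Measure.pi fun _ : Fin m => bern (μ + 1 / (3 * Real.sqrt m))).prod
        (Measure.pi fun _ : Fin n => bern μ)) ≤ 1 / 2 := by
  classical
  obtain ⟨hl, hu⟩ := id hμ
  -- `√m ≥ 3`, so `Δ ≤ 1 / 9` and the shifted mean stays in `(0, 1)`.
  have hs : (3 : ℝ) ≤ Real.sqrt m := by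
    apply Real.le_sqrt_of_sq_le
    have : (10 : ℝ) ≤ m := by exact_mod_cast hm
    linarith
  have hΔ0 : 0 < 1 / (3 * Real.sqrt m) := by positivity
  have hΔ1 : 1 / (3 * Real.sqrt m) ≤ 1 / 9 :=
    one_div_le_one_div_of_le (by norm_num) (by linarith)
  have h0 : 0 < μ := by linarith
  have h1 : μ < 1 := by linarith
  have hmass : ∀ p : ℝ, ∑ z : (Fin m → Bool) × (Fin n → Bool),
      (∏ i, bernMass p (z.1 i)) * ∏ i, bernMass μ (z.2 i) = 1 := by
    intro p
    rw [Fintype.sum_prod_type]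
    dsimp only
    rw [← Fintype.sum_mul_sum, sum_prod_bernMass, sum_prod_bernMass, mul_one]
  unfold tvDist
  have : Nonempty {s : Set ((Fin m → Bool) × (Fin n → Bool)) // MeasurableSet s} :=
    ⟨⟨∅, MeasurableSet.empty⟩⟩
  refine ciSup_le fun A => ?_
  rw [toReal_prod_pi_bern h0 h1 h0 h1, toReal_prod_pi_bern (by linarith) (by linarith) h0 h1]
  refine abs_sum_sub_sum_le_half _ _ (fun z => ?_) (hmass _) (hmass _) ?_ A.1
  · exact mul_pos (Finset.prod_pos fun i _ => bernMass_pos h0 h1 _)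
      (Finset.prod_pos fun i _ => bernMass_pos h0 h1 _)
  · rw [sum_sq_div_prod h0 h1]
    exact chiSq_pow_le_two hm hμ
end

section
/- Suppose I is an honest confidence-interval construction procedure for the target mean. Then for any integers m ≥ 10 and n ≥ 1 and any μ ∈ [3/8, 5/8], taking D_X = D_Z = Ber(μ), the expected length of the 90%-confidence interval satisfies E_{S ∼ Ber(μ)^{⊗(m+n)}}[λ(I(S, 0.1))] ≥ 1/(10·√m), where λ(J) denotes the length of the interval J. -/
/-!
The second sample carries no information about the mean of `D_X`, so the bound is a two-point
argument on the first sample. Put `μ' = μ + Δ` with `Δ = 1 / (4√m)`, and let `ν`, `ν'` be the laws of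
the sample when `D_X` is `Ber(μ)`, `Ber(μ')` respectively and `D_Z = Ber(μ)` in both cases.
Then `ν' = W · ν`, where `W = ∏ i, ℓ(x i)` is the likelihood ratio, and
`∫ W² dν = (1 + Δ² / (μ(1-μ)))^m ≤ (1 + 4 / (15 m))^m ≤ exp (4/15) ≤ 15/11`.

Honesty at `Ber(μ')` says that the event `B` that the interval contains `μ'` has `ν'`-probability
at least `9/10`; the second moment bound transfers this to `ν B ≥ 59/100`
(`prob_ge_of_secondMoment`). Honesty at `Ber(μ)` says that the interval contains `μ` with
`ν`-probability at least `9/10`. Hence with `ν`-probability at least `49/100` the interval contains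
both points and has length at least `Δ`, and `49/100 · Δ ≥ 1 / (10√m)`.
-/

open MeasureTheory

/-- The Bernoulli probability measure on `{0,1} ⊆ ℝ` with mean `p` (for `p ∈ [0,1]`). -/
noncomputable def bernR (p : ℝ) : Measure ℝ :=
  ENNReal.ofReal p • Measure.dirac 1 + ENNReal.ofReal (1 - p) • Measure.dirac 0

instance (p : ℝ) : IsFiniteMeasure (bernR p) := by
  constructor
  simp only [bernR, Measure.add_apply, Measure.smul_apply, smul_eq_mul, measure_univ, mul_one]
  exact ENNReal.add_lt_top.mpr ⟨ENNReal.ofReal_lt_top, ENNReal.ofReal_lt_top⟩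

/-! ### The Bernoulli measure -/

lemma isProbabilityMeasure_bernR {p : ℝ} (hp : p ∈ Set.Icc (0 : ℝ) 1) :
    IsProbabilityMeasure (bernR p) := by
  constructor
  simp only [bernR, Measure.add_apply, Measure.smul_apply, smul_eq_mul, measure_univ, mul_one]
  rw [← ENNReal.ofReal_add hp.1 (by linarith [hp.2])]
  simp

lemma integrable_bernR (p : ℝ) (f : ℝ → ℝ) : Integrable f (bernR p) := by
  unfold bernR
  refine Integrable.add_measure ?_ ?_ <;>
    exact (integrable_dirac (by simp [enorm_lt_top])).smul_measure ENNReal.ofReal_ne_top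

lemma integral_bernR {p : ℝ} (hp : p ∈ Set.Icc (0 : ℝ) 1) (f : ℝ → ℝ) :
    ∫ x, f x ∂(bernR p) = p * f 1 + (1 - p) * f 0 := by
  unfold bernR
  rw [integral_add_measure, integral_smul_measure, integral_smul_measure, integral_dirac,
    integral_dirac, ENNReal.toReal_ofReal hp.1, ENNReal.toReal_ofReal (by linarith [hp.2])]
  · simp
  all_goals exact (integrable_dirac (by simp [enorm_lt_top])).smul_measure ENNReal.ofReal_ne_top

lemma ae_mem_Icc_bernR (p : ℝ) : ∀ᵐ x ∂(bernR p), x ∈ Set.Icc (0 : ℝ) 1 := by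
  rw [ae_iff]
  change bernR p (Set.Icc (0 : ℝ) 1)ᶜ = 0
  simp [bernR, measurableSet_Icc.compl]

lemma bernR_Icc {p : ℝ} (hp : p ∈ Set.Icc (0 : ℝ) 1) : bernR p (Set.Icc 0 1) = 1 := by
  have := isProbabilityMeasure_bernR hp
  exact (prob_compl_eq_zero_iff measurableSet_Icc).1 (ae_iff.1 (ae_mem_Icc_bernR p))

/-! ### Likelihood ratios -/

/-- The likelihood ratio `d Ber(q) / d Ber(p)`; its value off `{0, 1}` is immaterial, and is chosen
so that the function is measurable and nonnegative everywhere. -/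
noncomputable def likRatio (p q : ℝ) (x : ℝ) : ℝ :=
  if x = 1 then q / p else (1 - q) / (1 - p)

lemma measurable_likRatio (p q : ℝ) : Measurable (likRatio p q) :=
  Measurable.ite (measurableSet_singleton 1) measurable_const measurable_const

lemma likRatio_nonneg {p q : ℝ} (hp : p ∈ Set.Ioo (0 : ℝ) 1) (hq : q ∈ Set.Icc (0 : ℝ) 1) (x : ℝ) :
    0 ≤ likRatio p q x := by
  unfold likRatio
  split_ifs
  · exact div_nonneg hq.1 hp.1.le
  · exact div_nonneg (by linarith [hq.2]) (by linarith [hp.2])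

lemma bernR_eq_withDensity {p : ℝ} (hp : p ∈ Set.Ioo (0 : ℝ) 1) (q : ℝ) :
    bernR q = (bernR p).withDensity (fun x => ENNReal.ofReal (likRatio p q x)) := by
  have h1 : ENNReal.ofReal p * ENNReal.ofReal (q / p) = ENNReal.ofReal q := by
    rw [← ENNReal.ofReal_mul hp.1.le, mul_div_cancel₀ _ hp.1.ne']
  have hp' : 0 < 1 - p := by linarith [hp.2]
  have h2 : ENNReal.ofReal (1 - p) * ENNReal.ofReal ((1 - q) / (1 - p))
      = ENNReal.ofReal (1 - q) := by
    rw [← ENNReal.ofReal_mul hp'.le, mul_div_cancel₀ _ hp'.ne']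
  ext s hs
  rw [withDensity_apply _ hs, ← lintegral_indicator hs]
  unfold bernR
  rw [lintegral_add_measure, lintegral_smul_measure, lintegral_smul_measure, lintegral_dirac,
    lintegral_dirac]
  simp only [Measure.add_apply, Measure.smul_apply, smul_eq_mul, Measure.dirac_apply' _ hs]
  by_cases a : (1 : ℝ) ∈ s <;> by_cases b : (0 : ℝ) ∈ s <;> simp [a, b, likRatio, h1, h2]

/-- A product of copies of `ℓ · μ` has density `∏ i, ℓ (x i)` with respect to the product of copies
of `μ`. -/
lemma pi_withDensity_ofReal {ι : Type*} [Fintype ι] (μ : Measure ℝ) [IsFiniteMeasure μ]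
    (l : ℝ → ℝ) (hl0 : ∀ x, 0 ≤ l x) (hl : Integrable l μ) :
    Measure.pi (fun _ : ι => μ.withDensity (fun x => ENNReal.ofReal (l x))) =
      (Measure.pi (fun _ : ι => μ)).withDensity (fun x => ENNReal.ofReal (∏ i, l (x i))) := by
  have : IsFiniteMeasure (μ.withDensity (fun x => ENNReal.ofReal (l x))) :=
    isFiniteMeasure_withDensity_ofReal hl.2
  refine Measure.pi_eq fun s hs => ?_
  rw [withDensity_apply _ (MeasurableSet.univ_pi hs), Measure.restrict_pi_pi,
    ← ofReal_integral_eq_lintegral_ofReal, integral_fintype_prod_eq_prod (fun _ => l),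
    ENNReal.ofReal_prod_of_nonneg]
  · refine Finset.prod_congr rfl fun i _ => ?_
    rw [withDensity_apply _ (hs i), ofReal_integral_eq_lintegral_ofReal hl.restrict
      (Filter.Eventually.of_forall hl0)]
  · exact fun i _ => integral_nonneg hl0
  · exact Integrable.fintype_prod fun i => hl.restrict
  · exact Filter.Eventually.of_forall fun x => Finset.prod_nonneg fun i _ => hl0 _

/-- If the likelihood ratio `W` has second moment at most `15/11`, an event of probability at least
`9/10` under `W · ν` has probability at least `59/100` under `ν`. With `b` the indicator of the
event, this integrates `W b ≤ b + W² / 2 - W / 2 + 1 / 8`, which is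
`(W - 1) (b - 1/2) ≤ (W - 1)² / 2 + 1 / 8`. -/
lemma prob_ge_of_secondMoment {Ω : Type*} [MeasurableSpace Ω] (ν : Measure Ω)
    [IsProbabilityMeasure ν] (W : Ω → ℝ) (hW0 : ∀ x, 0 ≤ W x) (hW : Integrable W ν)
    (hW2 : Integrable (fun x => W x ^ 2) ν) (h1 : ∫ x, W x ∂ν = 1)
    (h2 : ∫ x, W x ^ 2 ∂ν ≤ 15 / 11) (B : Set Ω) (hB : MeasurableSet B)
    (h : ENNReal.ofReal (9 / 10) ≤ (ν.withDensity (fun x => ENNReal.ofReal (W x))) B) :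
    59 / 100 ≤ ν.real B := by
  rw [withDensity_apply _ hB, ← ofReal_integral_eq_lintegral_ofReal hW.restrict
    (Filter.Eventually.of_forall hW0), ENNReal.ofReal_le_ofReal_iff
    (integral_nonneg hW0), ← integral_indicator hB] at h
  have hind : Integrable (B.indicator (fun _ => (1 : ℝ))) ν :=
    (integrable_const 1).indicator hB
  have key : ∫ x, B.indicator W x ∂ν ≤
      ∫ x, (B.indicator (fun _ => (1 : ℝ)) x + W x ^ 2 / 2 - W x / 2 + 1 / 8) ∂ν := by
    refine integral_mono (hW.indicator hB)
      (((hind.add (hW2.div_const 2)).sub (hW.div_const 2)).add (integrable_const _)) fun x => ?_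
    by_cases hx : x ∈ B
    · simp only [Set.indicator_of_mem hx]
      nlinarith [sq_nonneg (W x - 3 / 2)]
    · simp only [Set.indicator_of_notMem hx]
      nlinarith [sq_nonneg (W x - 1 / 2)]
  have i1 : Integrable (fun x => B.indicator (fun _ => (1 : ℝ)) x + W x ^ 2 / 2) ν :=
    hind.add (hW2.div_const 2)
  have i2 : Integrable (fun x => B.indicator (fun _ => (1 : ℝ)) x + W x ^ 2 / 2 - W x / 2) ν :=
    i1.sub (hW.div_const 2)
  rw [integral_add i2 (integrable_const _), integral_sub i1 (hW.div_const 2),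
    integral_add hind (hW2.div_const 2), integral_div, integral_div, h1,
    integral_indicator_const _ hB] at key
  simp at key
  linarith

lemma one_add_div_pow_le (m : ℕ) (hm : 10 ≤ m) (c : ℝ) (h0 : 0 ≤ c) (hc : c ≤ 4 / (15 * m)) :
    (1 + c) ^ m ≤ 15 / 11 := by
  have hm0 : (0 : ℝ) < m := by positivity
  have e1 : (1 + c) ^ m ≤ Real.exp (4 / 15) := by
    calc (1 + c) ^ m ≤ Real.exp c ^ m := by
          gcongr
          linarith [Real.add_one_le_exp c]
      _ = Real.exp (m * c) := (Real.exp_nat_mul c m).symm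
      _ ≤ Real.exp (4 / 15) := by
          gcongr
          calc (m : ℝ) * c ≤ m * (4 / (15 * m)) := by gcongr
            _ = 4 / 15 := by field_simp
  have e2 := Real.one_sub_le_exp_neg (4 / 15)
  rw [Real.exp_neg] at e2
  have e3 : Real.exp (4 / 15) ≤ 15 / 11 := by
    have := inv_anti₀ (by norm_num) e2
    rw [inv_inv] at this
    norm_num at this ⊢
    exact this
  exact e1.trans e3

/-- Coverage of at least `9/10` under `Ber(q)` gives coverage of at least `59/100` under `Ber(p)`
when `|q - p| ≤ 1 / (4√m)`; the law `R` of the second sample is the same in both cases. -/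
lemma prob_ge_of_shift {m n : ℕ} (hm : 10 ≤ m) {p q : ℝ} (hp : p ∈ Set.Icc (3/8 : ℝ) (5/8))
    (hq : q ∈ Set.Icc (0 : ℝ) 1) (hpq : (q - p) ^ 2 ≤ 1 / (16 * m)) (R : Measure (Fin n → ℝ))
    [IsProbabilityMeasure R] (B : Set ((Fin m → ℝ) × (Fin n → ℝ))) (hB : MeasurableSet B)
    (h : ENNReal.ofReal (9 / 10) ≤ ((Measure.pi fun _ : Fin m => bernR q).prod R) B) :
    59 / 100 ≤ ((Measure.pi fun _ : Fin m => bernR p).prod R).real B := by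
  have hp1 : p ∈ Set.Ioo (0 : ℝ) 1 := ⟨by linarith [hp.1], by linarith [hp.2]⟩
  have hp2 : p ∈ Set.Icc (0 : ℝ) 1 := ⟨hp1.1.le, hp1.2.le⟩
  have hp0 : p ≠ 0 := hp1.1.ne'
  have hp3 : 1 - p ≠ 0 := by linarith [hp1.2]
  have := isProbabilityMeasure_bernR hp2
  have hl0 := likRatio_nonneg hp1 hq
  have hlm := measurable_likRatio p q
  rw [bernR_eq_withDensity hp1 q, pi_withDensity_ofReal _ _ hl0 (integrable_bernR _ _),
    prod_withDensity_left (by fun_prop)] at h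
  have hsq : ∀ x : Fin m → ℝ, (∏ i, likRatio p q (x i)) ^ 2 = ∏ i, (likRatio p q (x i)) ^ 2 :=
    fun x => (Finset.prod_pow _ _ _).symm
  have hν : IsProbabilityMeasure ((Measure.pi fun _ : Fin m => bernR p).prod R) := inferInstance
  refine prob_ge_of_secondMoment ((Measure.pi fun _ : Fin m => bernR p).prod R)
    (fun z : (Fin m → ℝ) × (Fin n → ℝ) => ∏ i, likRatio p q (z.1 i))
    (fun z => Finset.prod_nonneg fun i _ => hl0 (z.1 i)) ?_ ?_ ?_ ?_ B hB h
  · exact (Integrable.fintype_prod (f := fun _ => likRatio p q)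
      fun i => integrable_bernR _ _).comp_fst R
  · simp_rw [hsq]
    exact (Integrable.fintype_prod (f := fun _ x => likRatio p q x ^ 2)
      fun i => integrable_bernR _ _).comp_fst R
  · rw [integral_fun_fst (fun x : Fin m → ℝ => ∏ i, likRatio p q (x i)),
      integral_fintype_prod_eq_pow, integral_bernR hp2]
    have : p * (q / p) + (1 - p) * ((1 - q) / (1 - p)) = 1 := by field_simp; ring
    simp [likRatio, this]
  · simp_rw [hsq]
    rw [integral_fun_fst (fun x : Fin m → ℝ => ∏ i, likRatio p q (x i) ^ 2),
      integral_fintype_prod_eq_pow (fun x => likRatio p q x ^ 2), integral_bernR hp2]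
    have : p * (q / p) ^ 2 + (1 - p) * ((1 - q) / (1 - p)) ^ 2
        = 1 + (q - p) ^ 2 / (p * (1 - p)) := by field_simp; ring
    simp only [likRatio, if_true, zero_ne_one, if_false, this, probReal_univ, one_smul,
      Fintype.card_fin]
    have hpp : 15 / 64 ≤ p * (1 - p) := by nlinarith [hp.1, hp.2]
    refine one_add_div_pow_le m hm _ (by positivity) ?_
    calc (q - p) ^ 2 / (p * (1 - p)) ≤ (1 / (16 * m)) / (15 / 64) := by gcongr
      _ = 4 / (15 * m) := by field_simp; norm_num

/-! ### The lower bound -/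

/-- No honest confidence-interval construction procedure can be adaptively narrow:
a confidence-interval procedure is given by measurable endpoint maps
`lo, hi : ([0,1]^m × [0,1]^n) × (0,1) → ℝ` producing intervals `[lo S δ, hi S δ] ⊆ [0,1]`;
it is honest if for all Borel probability distributions `D_X, D_Z` supported on `[0,1]`
and all `δ ∈ (0,1)`, the interval contains the mean `μ_X = ∫ x ∂D_X` with probability at
least `1 − δ` under `S ∼ D_X^{⊗m} ⊗ D_Z^{⊗n}`. Then for any `m ≥ 10`, `n ≥ 1` and
`μ ∈ [3/8, 5/8]`, taking `D_X = D_Z = Ber(μ)`, the expected length of the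
`90%`-confidence interval is at least `1/(10√m)`. -/
theorem honest_ci_expected_length_lower_bound (m n : ℕ) (hm : 10 ≤ m) (hn : 1 ≤ n)
    (μ : ℝ) (hμ : μ ∈ Set.Icc (3/8 : ℝ) (5/8))
    (lo hi : ((Fin m → ℝ) × (Fin n → ℝ)) → ℝ → ℝ)
    (hlo : ∀ δ : ℝ, Measurable fun S => lo S δ)
    (hhi : ∀ δ : ℝ, Measurable fun S => hi S δ)
    (hinterval : ∀ (S : (Fin m → ℝ) × (Fin n → ℝ)) (δ : ℝ), δ ∈ Set.Ioo (0 : ℝ) 1 →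
      (∀ i, S.1 i ∈ Set.Icc (0 : ℝ) 1) → (∀ j, S.2 j ∈ Set.Icc (0 : ℝ) 1) →
      0 ≤ lo S δ ∧ lo S δ ≤ hi S δ ∧ hi S δ ≤ 1)
    (honest : ∀ (DX DZ : Measure ℝ) [IsProbabilityMeasure DX] [IsProbabilityMeasure DZ],
      DX (Set.Icc 0 1) = 1 → DZ (Set.Icc 0 1) = 1 →
      ∀ δ ∈ Set.Ioo (0 : ℝ) 1,
        ENNReal.ofReal (1 - δ) ≤
          ((Measure.pi fun _ : Fin m => DX).prod (Measure.pi fun _ : Fin n => DZ))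
            {S | lo S δ ≤ (∫ x, x ∂DX) ∧ (∫ x, x ∂DX) ≤ hi S δ}) :
    1 / (10 * Real.sqrt m) ≤
      ∫ S, (hi S 0.1 - lo S 0.1)
        ∂((Measure.pi fun _ : Fin m => bernR μ).prod
          (Measure.pi fun _ : Fin n => bernR μ)) := by
  have hm0 : (0 : ℝ) < m := by positivity
  have hmR : (10 : ℝ) ≤ m := by exact_mod_cast hm
  have hs0 : 0 < Real.sqrt m := Real.sqrt_pos.2 hm0
  have hs3 : 3 ≤ Real.sqrt m := Real.le_sqrt_of_sq_le (by linarith)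
  obtain ⟨Δ, hΔ⟩ : ∃ Δ : ℝ, Δ = 1 / (4 * Real.sqrt m) := ⟨_, rfl⟩
  have hΔ0 : 0 < Δ := by rw [hΔ]; positivity
  have hΔ1 : Δ ≤ 1 / 12 := by
    rw [hΔ]
    exact one_div_le_one_div_of_le (by norm_num) (by linarith)
  have hΔ2 : Δ ^ 2 = 1 / (16 * m) := by
    rw [hΔ, div_pow, mul_pow, Real.sq_sqrt hm0.le]
    norm_num
  have hp : μ ∈ Set.Icc (0 : ℝ) 1 := ⟨by linarith [hμ.1], by linarith [hμ.2]⟩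
  have hq : μ + Δ ∈ Set.Icc (0 : ℝ) 1 := ⟨by linarith [hμ.1], by linarith [hμ.2]⟩
  have := isProbabilityMeasure_bernR hp
  have := isProbabilityMeasure_bernR hq
  have hδ : (0.1 : ℝ) ∈ Set.Ioo (0 : ℝ) 1 := by norm_num
  have hA := honest (bernR μ) (bernR μ) (bernR_Icc hp) (bernR_Icc hp) 0.1 hδ
  have hB := honest (bernR (μ + Δ)) (bernR μ) (bernR_Icc hq) (bernR_Icc hp) 0.1 hδ
  have hmean : ∀ {p : ℝ}, p ∈ Set.Icc (0 : ℝ) 1 → ∫ x, x ∂(bernR p) = p := by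
    intro p hp
    rw [integral_bernR hp (fun x => x)]
    ring
  have h09 : (1 - 0.1 : ℝ) = 9 / 10 := by norm_num
  rw [hmean hp, h09] at hA
  rw [hmean hq, h09] at hB
  have hmeas : ∀ t : ℝ, MeasurableSet
      {S : (Fin m → ℝ) × (Fin n → ℝ) | lo S 0.1 ≤ t ∧ t ≤ hi S 0.1} := fun t =>
    (measurableSet_le (hlo _) measurable_const).inter (measurableSet_le measurable_const (hhi _))
  have hB' := prob_ge_of_shift hm hμ hq (by rw [add_sub_cancel_left, hΔ2]) _ _ (hmeas _) hB
  set ν := (Measure.pi fun _ : Fin m => bernR μ).prod (Measure.pi fun _ : Fin n => bernR μ) with hν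
  set A := {S : (Fin m → ℝ) × (Fin n → ℝ) | lo S 0.1 ≤ μ ∧ μ ≤ hi S 0.1} with hAdef
  set B := {S : (Fin m → ℝ) × (Fin n → ℝ) | lo S 0.1 ≤ μ + Δ ∧ μ + Δ ≤ hi S 0.1} with hBdef
  have hA' : 9 / 10 ≤ ν.real A := (ENNReal.ofReal_le_iff_le_toReal (measure_ne_top _ _)).1 hA
  have hAB : 49 / 100 ≤ ν.real (A ∩ B) := by
    have h1 := measureReal_union_add_inter (μ := ν) (s := A) (t := B) (hmeas (μ + Δ))
    have h2 : ν.real (A ∪ B) ≤ 1 := measureReal_le_one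
    linarith
  have hae : ∀ᵐ S ∂ν, (∀ i, S.1 i ∈ Set.Icc (0 : ℝ) 1) ∧ (∀ j, S.2 j ∈ Set.Icc (0 : ℝ) 1) := by
    have hpi : ∀ k : ℕ, ∀ᵐ x ∂(Measure.pi fun _ : Fin k => bernR μ),
        ∀ i, x i ∈ Set.Icc (0 : ℝ) 1 := fun k =>
      Filter.eventually_all.2 fun i =>
        (Measure.tendsto_eval_ae_ae (μ := fun _ : Fin k => bernR μ) (i := i)).eventually
          (ae_mem_Icc_bernR μ)
    exact (Measure.quasiMeasurePreserving_fst.ae (hpi m)).and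
      (Measure.quasiMeasurePreserving_snd.ae (hpi n))
  have hint : Integrable (fun S => hi S 0.1 - lo S 0.1) ν := by
    refine Integrable.of_bound ((hhi _).sub (hlo _)).aestronglyMeasurable 1 ?_
    filter_upwards [hae] with S hS
    obtain ⟨h1, h2, h3⟩ := hinterval S 0.1 hδ hS.1 hS.2
    rw [Real.norm_eq_abs, abs_le]
    constructor <;> linarith
  have hABm : MeasurableSet (A ∩ B) := (hmeas μ).inter (hmeas (μ + Δ))
  calc 1 / (10 * Real.sqrt m) ≤ 49 / 100 * Δ := by
        rw [hΔ, div_le_iff₀ (by positivity)]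
        field_simp
        norm_num
    _ ≤ ν.real (A ∩ B) * Δ := by gcongr
    _ = ∫ S, (A ∩ B).indicator (fun _ => Δ) S ∂ν := by
        rw [integral_indicator_const _ hABm, smul_eq_mul]
    _ ≤ ∫ S, (hi S 0.1 - lo S 0.1) ∂ν := by
        refine integral_mono_ae ((integrable_const Δ).indicator hABm) hint ?_
        filter_upwards [hae] with S hS
        obtain ⟨h1, h2, h3⟩ := hinterval S 0.1 hδ hS.1 hS.2
        by_cases hx : S ∈ A ∩ B
        · rw [Set.indicator_of_mem hx]
          linarith [hx.1.1, hx.2.2]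
        · rw [Set.indicator_of_notMem hx]
          linarith
end
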